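/- Monogenic Fischer decomposition in one vector variable for Clifford-algebra-valued polynomials: every polynomial P in x_1, …, x_m with coefficients in the complex Clifford algebra Cl_m has a unique representation as a finite sum P = M_0 + x M_1 + x² M_2 + ⋯ + x^j M_j + ⋯, where x denotes the operator of left multiplication by the vector variable x = x_1 e_1 + ⋯ + x_m e_m, and each M_j is monogenic, i.e. ∂ M_j = 0 for the Dirac operator ∂ = e_1 ∂_{x_1} + ⋯ + e_m ∂_{x_m}. -/

import Mathlib

open MvPolynomial TensorProduct

/-- The quadratic form `−(z_1² + ⋯ + z_m²)` on `ℂ^m`, whose Clifford algebra is the complex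
Clifford algebra `Cl_m` with `e_s e_t + e_t e_s = −2δ_{st}`. -/
noncomputable def cliffordQ (m : ℕ) : QuadraticForm ℂ (Fin m → ℂ) :=
  QuadraticMap.weightedSumSquares ℂ (fun _ : Fin m => (-1 : ℂ))

/-- The generator `e_s` of the Clifford algebra `Cl_m`. -/
noncomputable def e (m : ℕ) (s : Fin m) : CliffordAlgebra (cliffordQ m) :=
  CliffordAlgebra.ι (cliffordQ m) (Pi.single s 1)

/-- The Dirac operator `∂ = Σ_s (e_s ·) ∘ ∂_{x_s}` on Clifford-algebra-valued polynomials. -/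
noncomputable def dirac (m : ℕ) :
    (MvPolynomial (Fin m) ℂ ⊗[ℂ] CliffordAlgebra (cliffordQ m)) →ₗ[ℂ]
      (MvPolynomial (Fin m) ℂ ⊗[ℂ] CliffordAlgebra (cliffordQ m)) :=
  ∑ s : Fin m,
    TensorProduct.map ((pderiv s).toLinearMap) (LinearMap.mulLeft ℂ (e m s))

/-- The vector variable operator `x = Σ_s (x_s ·) ∘ (e_s ·)`. -/
noncomputable def vecVar (m : ℕ) :
    (MvPolynomial (Fin m) ℂ ⊗[ℂ] CliffordAlgebra (cliffordQ m)) →ₗ[ℂ]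
      (MvPolynomial (Fin m) ℂ ⊗[ℂ] CliffordAlgebra (cliffordQ m)) :=
  ∑ s : Fin m,
    TensorProduct.map (LinearMap.mulLeft ℂ (X s)) (LinearMap.mulLeft ℂ (e m s))

section abstractFischer

variable {V : Type*} [AddCommGroup V] [Module ℂ V]

/-- The three facts about `D^j x^j` on `ker D`. -/
lemma fischer_key (D x E : V →ₗ[ℂ] V) (m : ℕ) (hm : 0 < m)
    (hDx : ∀ v, D (x v) = - x (D v) - ((2 : ℂ) • E v + (m : ℂ) • v))
    (hEx : ∀ v, E (x v) = x (E v) + x v)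
    (hDE : ∀ v, D (E v) = E (D v) + D v)
    (hinj : ∀ a : ℕ, 0 < a → ∀ v, (2 : ℂ) • E v + (a : ℂ) • v = 0 → v = 0)
    (hsurj : ∀ a : ℕ, 0 < a → ∀ w, ∃ v, (2 : ℂ) • E v + (a : ℂ) • v = w) (j : ℕ) :
    (∀ M, D M = 0 → D ((D ^ j) ((x ^ j) M)) = 0) ∧
    (∀ N, D N = 0 → ∃ M, D M = 0 ∧ (D ^ j) ((x ^ j) M) = N) ∧
    (∀ M, D M = 0 → (D ^ j) ((x ^ j) M) = 0 → M = 0) := by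
  have xs : ∀ (i : ℕ) v, (x ^ (i + 1)) v = x ((x ^ i) v) := fun i v => by
    rw [pow_succ']; rfl
  have Ds : ∀ (i : ℕ) v, (D ^ (i + 1)) v = (D ^ i) (D v) := fun i v => by
    rw [pow_succ]; rfl
  have hExi : ∀ (i : ℕ) v, E ((x ^ i) v) = (x ^ i) (E v) + (i : ℂ) • (x ^ i) v := by
    intro i
    induction i with
    | zero => intro v; simp
    | succ i ih =>
      intro v
      rw [xs, hEx, ih, xs, map_add, map_smul]
      push_cast
      module
  have hc : ∀ (i : ℕ) (M : V), D M = 0 →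
      D ((x ^ (2 * i)) M) = (-(2 * i : ℂ)) • (x ^ (2 * i - 1)) M ∧
      D ((x ^ (2 * i + 1)) M) =
        (x ^ (2 * i)) (- ((2 : ℂ) • E M + ((2 * i + m : ℕ) : ℂ) • M)) := by
    intro i M hM
    have step : ∀ i : ℕ, D ((x ^ (2 * i)) M) = (-(2 * i : ℂ)) • (x ^ (2 * i - 1)) M →
        D ((x ^ (2 * i + 1)) M) =
        (x ^ (2 * i)) (- ((2 : ℂ) • E M + ((2 * i + m : ℕ) : ℂ) • M)) := by
      intro i h
      rw [xs, hDx, h, hExi]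
      have : x ((-(2 * i : ℂ)) • (x ^ (2 * i - 1)) M) = (-(2 * i : ℂ)) • (x ^ (2 * i)) M := by
        rcases i with _ | i
        · simp
        · rw [map_smul, ← xs]; rfl
      rw [this]
      simp only [map_neg, map_add, map_smul]
      push_cast
      module
    induction i with
    | zero =>
      have h0 : D ((x ^ (2 * 0)) M) = (-(2 * (0 : ℕ) : ℂ)) • (x ^ (2 * 0 - 1)) M := by simp [hM]
      exact ⟨h0, step 0 h0⟩
    | succ i ih =>
      have h0 : D ((x ^ (2 * (i + 1))) M) =
          (-(2 * (i + 1 : ℕ) : ℂ)) • (x ^ (2 * (i + 1) - 1)) M := by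
        have e1 : 2 * (i + 1) = (2 * i + 1) + 1 := by ring
        rw [e1, xs, hDx, ih.2, hExi, ← xs, Nat.add_sub_cancel]
        simp only [map_neg, map_add, map_smul]
        push_cast
        module
      exact ⟨h0, step _ h0⟩
  have hT : ∀ (a : ℕ) M, D M = 0 → D ((2 : ℂ) • E M + (a : ℂ) • M) = 0 := by
    intro a M h
    simp [hDE, h]
  have hT' : ∀ (a : ℕ) M, D ((2 : ℂ) • E M + (a : ℂ) • M) = 0 → D M = 0 := by
    intro a M h
    apply hinj (a + 2) (by omega)
    rw [← h]
    simp only [map_add, map_smul, hDE]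
    push_cast
    module
  -- the bijection c
  have hcc : ∀ i : ℕ, ∃ c : V → V, (∀ M, D M = 0 → D ((x ^ (i + 1)) M) = (x ^ i) (c M)) ∧
      (∀ M, D M = 0 → D (c M) = 0) ∧ (∀ N, D N = 0 → ∃ M, D M = 0 ∧ c M = N) ∧
      (∀ M, D M = 0 → c M = 0 → M = 0) := by
    intro i
    rcases Nat.even_or_odd' i with ⟨k, rfl | rfl⟩
    · refine ⟨fun M => - ((2 : ℂ) • E M + ((2 * k + m : ℕ) : ℂ) • M),
        fun M hM => (hc k M hM).2, fun M hM => ?_, fun N hN => ?_, fun M hM h => ?_⟩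
      · rw [map_neg, hT _ _ hM, neg_zero]
      · obtain ⟨M, h⟩ := hsurj (2 * k + m) (by omega) (-N)
        refine ⟨M, hT' (2 * k + m) M (by rw [h, map_neg, hN, neg_zero]), ?_⟩
        simp only [h, neg_neg]
      · exact hinj (2 * k + m) (by omega) M (neg_eq_zero.mp h)
    · have hk : (-(2 * (k + 1 : ℕ) : ℂ)) ≠ 0 := by
        rw [neg_ne_zero]
        exact mul_ne_zero two_ne_zero (Nat.cast_ne_zero.mpr (by omega))
      refine ⟨fun M => (-(2 * (k + 1 : ℕ) : ℂ)) • M,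
        fun M hM => ?_, fun M hM => ?_, fun N hN => ?_, fun M hM h => ?_⟩
      · have := (hc (k + 1) M hM).1
        rw [map_smul]
        exact this
      · rw [map_smul, hM, smul_zero]
      · refine ⟨(-(2 * (k + 1 : ℕ) : ℂ))⁻¹ • N, by rw [map_smul, hN, smul_zero], ?_⟩
        exact smul_inv_smul₀ hk N
      · exact (smul_eq_zero.mp h).resolve_left hk
  induction j with
  | zero => exact ⟨fun M h => by simpa using h, fun N h => ⟨N, h, by simp⟩, fun M _ h => by simpa using h⟩
  | succ j ih =>
    obtain ⟨c, h1, h2, h3, h4⟩ := hcc j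
    obtain ⟨i1, i2, i3⟩ := ih
    have h : ∀ M, D M = 0 → (D ^ (j + 1)) ((x ^ (j + 1)) M) = (D ^ j) ((x ^ j) (c M)) :=
      fun M hM => by rw [Ds, h1 M hM]
    refine ⟨fun M hM => ?_, fun N hN => ?_, fun M hM h0 => ?_⟩
    · rw [h M hM]; exact i1 _ (h2 M hM)
    · obtain ⟨N', hN', e1⟩ := i2 N hN
      obtain ⟨M, hM, e2⟩ := h3 N' hN'
      exact ⟨M, hM, by rw [h M hM, e2, e1]⟩
    · rw [h M hM] at h0
      exact h4 M hM (i3 _ (h2 M hM) h0)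

lemma fischer_abstract (D x E : V →ₗ[ℂ] V) (m : ℕ) (hm : 0 < m)
    (hDx : ∀ v, D (x v) = - x (D v) - ((2 : ℂ) • E v + (m : ℂ) • v))
    (hEx : ∀ v, E (x v) = x (E v) + x v)
    (hDE : ∀ v, D (E v) = E (D v) + D v)
    (hinj : ∀ a : ℕ, 0 < a → ∀ v, (2 : ℂ) • E v + (a : ℂ) • v = 0 → v = 0)
    (hsurj : ∀ a : ℕ, 0 < a → ∀ w, ∃ v, (2 : ℂ) • E v + (a : ℂ) • v = w)
    (hnil : ∀ v, ∃ n : ℕ, (D ^ n) v = 0) (P : V) :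
    ∃! M : ℕ →₀ V, (∀ j, D (M j) = 0) ∧ P = M.sum fun j Mj => (x ^ j) Mj := by
  have key := fischer_key D x E m hm hDx hEx hDE hinj hsurj
  have ex : ∀ (n : ℕ) (P : V), (D ^ n) P = 0 →
      ∃ M : ℕ →₀ V, (∀ j, D (M j) = 0) ∧ P = M.sum fun j Mj => (x ^ j) Mj := by
    intro n
    induction n with
    | zero => intro P h; exact ⟨0, by simp, by simpa using h⟩
    | succ n ih =>
      intro P h
      have hN : D ((D ^ n) P) = 0 := by rw [← h, pow_succ']; rfl
      obtain ⟨M0, hM0, e0⟩ := (key n).2.1 _ hN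
      obtain ⟨M, hM, e1⟩ := ih (P - (x ^ n) M0) (by rw [map_sub, e0, sub_self])
      refine ⟨M + Finsupp.single n M0, fun j => ?_, ?_⟩
      · rw [Finsupp.add_apply, map_add, hM, zero_add, Finsupp.single_apply]
        split_ifs <;> simp [hM0]
      · rw [Finsupp.sum_add_index' (by simp) (by simp), ← e1, Finsupp.sum_single_index (by simp)]
        abel
  have un : ∀ M : ℕ →₀ V, (∀ j, D (M j) = 0) → (M.sum fun j Mj => (x ^ j) Mj) = 0 → M = 0 := by
    intro M hM h
    by_contra hne
    have hs : M.support.Nonempty := Finsupp.support_nonempty_iff.mpr hne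
    set N := M.support.max' hs with hNdef
    have hNm : N ∈ M.support := M.support.max'_mem hs
    have h2 := congrArg (D ^ N) h
    rw [Finsupp.sum, map_sum, map_zero, Finset.sum_eq_single_of_mem N hNm] at h2
    · exact Finsupp.mem_support_iff.mp hNm ((key N).2.2 _ (hM N) h2)
    · intro j hj hjN
      have hlt : j < N := lt_of_le_of_ne (M.support.le_max' j hj) hjN
      obtain ⟨k, hk⟩ : ∃ k, N = k + (1 + j) := ⟨N - (1 + j), by omega⟩
      rw [hk, pow_add, pow_add, pow_one]
      simp only [Module.End.mul_apply]
      rw [(key j).1 _ (hM j), map_zero]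
  obtain ⟨n, hn⟩ := hnil P
  obtain ⟨M, hM, e1⟩ := ex n P hn
  refine ⟨M, ⟨hM, e1⟩, ?_⟩
  rintro M' ⟨hM', e2⟩
  rw [← sub_eq_zero]
  apply un
  · intro j; rw [Finsupp.sub_apply, map_sub, hM, hM', sub_zero]
  · rw [Finsupp.sum_sub_index (by simp), ← e1, ← e2, sub_self]

end abstractFischer

/-- Euler derivation. -/
noncomputable def eulerD (m : ℕ) :
    Derivation ℂ (MvPolynomial (Fin m) ℂ) (MvPolynomial (Fin m) ℂ) :=
  ∑ s : Fin m, (X s : MvPolynomial (Fin m) ℂ) • pderiv s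

lemma eulerD_apply (m : ℕ) (p : MvPolynomial (Fin m) ℂ) :
    eulerD m p = ∑ s : Fin m, X s * pderiv s p := by
  have : ∀ S : Finset (Fin m),
      (∑ s ∈ S, (X s : MvPolynomial (Fin m) ℂ) • pderiv s : Derivation ℂ _ _) p
        = ∑ s ∈ S, X s * pderiv s p := by
    intro S
    induction S using Finset.induction_on with
    | empty => simp
    | insert a S ha ih => rw [Finset.sum_insert ha, Finset.sum_insert ha, Derivation.add_apply, ih]; rfl
  exact this _

lemma eulerD_X (m : ℕ) (t : Fin m) : eulerD m (X t) = X t := by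
  rw [eulerD_apply]
  simp [pderiv_X, Pi.single_apply]

lemma eulerD_monomial (m : ℕ) (d : Fin m →₀ ℕ) (c : ℂ) :
    eulerD m (monomial d c) = (d.degree : ℂ) • monomial d c := by
  rw [eulerD_apply, (isHomogeneous_monomial c rfl).sum_X_mul_pderiv]
  simp [smul_monomial, ← Nat.cast_smul_eq_nsmul ℂ]

lemma pderiv_eulerD (m : ℕ) (s : Fin m) (p : MvPolynomial (Fin m) ℂ) :
    pderiv s (eulerD m p) = eulerD m (pderiv s p) + pderiv s p := by
  have h : ⁅pderiv (R := ℂ) s, eulerD m⁆ = pderiv (R := ℂ) s := by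
    apply MvPolynomial.derivation_ext
    intro t
    rw [Derivation.commutator_apply, eulerD_X, pderiv_X, Pi.single_apply]
    split_ifs <;> simp
  have := congrArg (fun F => F p) h
  simp only [Derivation.commutator_apply] at this
  rw [sub_eq_iff_eq_add.mp this, add_comm]

lemma e_anticomm (m : ℕ) (s t : Fin m) :
    e m s * e m t + e m t * e m s = algebraMap ℂ _ (if s = t then -2 else 0) := by
  unfold e
  rw [CliffordAlgebra.ι_mul_ι_add_swap]
  congr 1
  simp only [QuadraticMap.polar, cliffordQ, QuadraticMap.weightedSumSquares_apply, Pi.add_apply]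
  rw [← Finset.sum_sub_distrib, ← Finset.sum_sub_distrib]
  simp only [← smul_sub, smul_eq_mul]
  have : ∀ i : Fin m, (-1 : ℂ) * (((Pi.single s 1 : Fin m → ℂ) i + (Pi.single t 1 : Fin m → ℂ) i) *
      ((Pi.single s 1 : Fin m → ℂ) i + (Pi.single t 1 : Fin m → ℂ) i)) -
      -1 * ((Pi.single s 1 : Fin m → ℂ) i * (Pi.single s 1 : Fin m → ℂ) i) -
      -1 * ((Pi.single t 1 : Fin m → ℂ) i * (Pi.single t 1 : Fin m → ℂ) i)
      = if i = s then (if s = t then -2 else 0) else 0 := by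
    intro i
    simp only [Pi.single_apply]
    by_cases h1 : i = s
    · subst h1
      by_cases h2 : i = t <;> simp [h2]
      norm_num
    · simp [h1]
  rw [Finset.sum_congr rfl (fun i _ => this i)]
  simp

lemma dirac_tmul (m : ℕ) (p : MvPolynomial (Fin m) ℂ) (a : CliffordAlgebra (cliffordQ m)) :
    dirac m (p ⊗ₜ a) = ∑ s : Fin m, pderiv s p ⊗ₜ (e m s * a) := by
  simp [dirac, LinearMap.sum_apply]

lemma vecVar_tmul (m : ℕ) (p : MvPolynomial (Fin m) ℂ) (a : CliffordAlgebra (cliffordQ m)) :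
    vecVar m (p ⊗ₜ a) = ∑ s : Fin m, (X s * p) ⊗ₜ (e m s * a) := by
  simp [vecVar, LinearMap.sum_apply]

/-- Euler operator. -/
noncomputable def eulerOp (m : ℕ) :
    (MvPolynomial (Fin m) ℂ ⊗[ℂ] CliffordAlgebra (cliffordQ m)) →ₗ[ℂ]
      (MvPolynomial (Fin m) ℂ ⊗[ℂ] CliffordAlgebra (cliffordQ m)) :=
  TensorProduct.map (eulerD m).toLinearMap LinearMap.id

lemma eulerOp_tmul (m : ℕ) (p : MvPolynomial (Fin m) ℂ) (a : CliffordAlgebra (cliffordQ m)) :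
    eulerOp m (p ⊗ₜ a) = eulerD m p ⊗ₜ a := rfl

lemma op_Ex (m : ℕ) (v) : eulerOp m (vecVar m v) = vecVar m (eulerOp m v) + vecVar m v := by
  induction v using TensorProduct.induction_on with
  | zero => simp
  | add u w hu hw => simp only [map_add, hu, hw]; abel
  | tmul p a =>
    rw [eulerOp_tmul, vecVar_tmul, vecVar_tmul, map_sum, ← Finset.sum_add_distrib]
    refine Finset.sum_congr rfl fun s _ => ?_
    rw [eulerOp_tmul, ← TensorProduct.add_tmul, Derivation.leibniz, eulerD_X, smul_eq_mul,
      smul_eq_mul, mul_comm p]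

lemma op_DE (m : ℕ) (v) : dirac m (eulerOp m v) = eulerOp m (dirac m v) + dirac m v := by
  induction v using TensorProduct.induction_on with
  | zero => simp
  | add u w hu hw => simp only [map_add, hu, hw]; abel
  | tmul p a =>
    rw [eulerOp_tmul, dirac_tmul, dirac_tmul, map_sum, ← Finset.sum_add_distrib]
    refine Finset.sum_congr rfl fun s _ => ?_
    rw [eulerOp_tmul, ← TensorProduct.add_tmul, pderiv_eulerD]

lemma op_Dx (m : ℕ) (v) : dirac m (vecVar m v) =
    - vecVar m (dirac m v) - ((2 : ℂ) • eulerOp m v + (m : ℂ) • v) := by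
  induction v using TensorProduct.induction_on with
  | zero => simp
  | add u w hu hw => simp only [map_add, hu, hw, smul_add]; abel
  | tmul p a =>
    rw [eulerOp_tmul, dirac_tmul, vecVar_tmul, map_sum, map_sum]
    simp only [dirac_tmul, vecVar_tmul]
    rw [Finset.sum_comm (f := fun s t : Fin m => (X t * pderiv s p) ⊗ₜ[ℂ] (e m t * (e m s * a)))]
    have hs : ∀ t s : Fin m, pderiv s (X t * p) ⊗ₜ[ℂ] (e m s * (e m t * a)) +
        (X t * pderiv s p) ⊗ₜ[ℂ] (e m t * (e m s * a)) =
        if t = s then (-2 : ℂ) • ((X t * pderiv t p) ⊗ₜ[ℂ] a) - p ⊗ₜ[ℂ] a else 0 := by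
      intro t s
      have h := e_anticomm m s t
      rw [Derivation.leibniz, smul_eq_mul, smul_eq_mul, TensorProduct.add_tmul,
        add_right_comm, ← TensorProduct.tmul_add, ← mul_assoc, ← mul_assoc, ← add_mul, h, pderiv_X]
      by_cases hst : t = s
      · subst hst
        have h' : e m t * e m t = algebraMap ℂ _ (-1) := by
          have h2 : (2 : ℂ) • (e m t * e m t) = (2 : ℂ) • algebraMap ℂ _ (-1) := by
            rw [two_smul, h, if_pos rfl, Algebra.smul_def, ← map_mul]
            norm_num
          exact smul_right_injective _ (two_ne_zero (α := ℂ)) h2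
        rw [h', if_pos rfl, if_pos rfl, ← Algebra.smul_def, ← Algebra.smul_def,
          TensorProduct.tmul_smul, TensorProduct.tmul_smul]
        simp only [Pi.single_eq_same, mul_one]
        module
      · rw [if_neg hst, if_neg (Ne.symm hst)]
        simp [Pi.single_apply, hst, Ne.symm hst]
    have hsum : ∑ t : Fin m, ∑ s : Fin m, pderiv s (X t * p) ⊗ₜ[ℂ] (e m s * (e m t * a)) +
        ∑ t : Fin m, ∑ s : Fin m, (X t * pderiv s p) ⊗ₜ[ℂ] (e m t * (e m s * a)) =
        - ((2 : ℂ) • (eulerD m p ⊗ₜ[ℂ] a) + (m : ℂ) • (p ⊗ₜ[ℂ] a)) := by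
      simp only [← Finset.sum_add_distrib, hs]
      simp only [Finset.sum_ite_eq, Finset.mem_univ, if_true]
      rw [Finset.sum_sub_distrib, ← Finset.smul_sum, ← TensorProduct.sum_tmul, ← eulerD_apply]
      simp only [Finset.sum_const, Finset.card_univ, Fintype.card_fin,
        ← Nat.cast_smul_eq_nsmul ℂ]
      module
    rw [eq_sub_of_add_eq hsum]
    abel

/-- Inverse of `2E + a`. -/
noncomputable def eulerInv (m a : ℕ) : MvPolynomial (Fin m) ℂ →ₗ[ℂ] MvPolynomial (Fin m) ℂ :=
  (basisMonomials (Fin m) ℂ).constr ℂ fun d =>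
    ((2 * d.degree + a : ℂ)⁻¹ • monomial d (1 : ℂ))

lemma eulerInv_monomial (m a : ℕ) (d : Fin m →₀ ℕ) :
    eulerInv m a (monomial d 1) = (2 * d.degree + a : ℂ)⁻¹ • monomial d (1 : ℂ) := by
  have := (basisMonomials (Fin m) ℂ).constr_basis ℂ
    (fun d => ((2 * d.degree + a : ℂ)⁻¹ • monomial d (1 : ℂ))) d
  rwa [coe_basisMonomials] at this

lemma denom_ne (a : ℕ) (ha : 0 < a) (n : ℕ) : (2 * n + a : ℂ) ≠ 0 := by
  have : ((2 * n + a : ℕ) : ℂ) ≠ 0 := Nat.cast_ne_zero.mpr (by omega)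
  push_cast at this
  exact this

lemma eulerInv_left (m a : ℕ) (ha : 0 < a) (p : MvPolynomial (Fin m) ℂ) :
    eulerInv m a ((2 : ℂ) • eulerD m p + (a : ℂ) • p) = p := by
  have : eulerInv m a ∘ₗ ((2 : ℂ) • (eulerD m).toLinearMap + (a : ℂ) • LinearMap.id)
      = LinearMap.id := by
    refine (basisMonomials (Fin m) ℂ).ext fun d => ?_
    have e1 : (2 : ℂ) • eulerD m (monomial d 1) + (a : ℂ) • monomial d (1 : ℂ) =
        (2 * d.degree + a : ℂ) • monomial d (1 : ℂ) := by
      rw [eulerD_monomial]; module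
    rw [coe_basisMonomials]
    change eulerInv m a ((2 : ℂ) • eulerD m (monomial d 1) + (a : ℂ) • monomial d (1 : ℂ)) =
      monomial d 1
    rw [e1, map_smul, eulerInv_monomial, smul_inv_smul₀ (denom_ne a ha _)]
  exact LinearMap.congr_fun this p

lemma eulerInv_right (m a : ℕ) (ha : 0 < a) (p : MvPolynomial (Fin m) ℂ) :
    (2 : ℂ) • eulerD m (eulerInv m a p) + (a : ℂ) • eulerInv m a p = p := by
  have : ((2 : ℂ) • (eulerD m).toLinearMap + (a : ℂ) • LinearMap.id) ∘ₗ eulerInv m a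
      = LinearMap.id := by
    refine (basisMonomials (Fin m) ℂ).ext fun d => ?_
    rw [coe_basisMonomials]
    change (2 : ℂ) • eulerD m (eulerInv m a (monomial d 1)) +
      (a : ℂ) • eulerInv m a (monomial d (1 : ℂ)) = monomial d 1
    rw [eulerInv_monomial, Derivation.map_smul, eulerD_monomial]
    have e1 : (2 * d.degree + a : ℂ)⁻¹ • (2 * d.degree + a : ℂ) • monomial d (1 : ℂ) =
      monomial d 1 := inv_smul_smul₀ (denom_ne a ha _) _
    refine Eq.trans ?_ e1
    module
  exact LinearMap.congr_fun this p

lemma op_left (m a : ℕ) (ha : 0 < a)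
    (v : MvPolynomial (Fin m) ℂ ⊗[ℂ] CliffordAlgebra (cliffordQ m)) :
    TensorProduct.map (eulerInv m a) LinearMap.id ((2 : ℂ) • eulerOp m v + (a : ℂ) • v) = v := by
  induction v using TensorProduct.induction_on with
  | zero => simp
  | add u w hu hw =>
    nth_rewrite 3 [← hu]
    nth_rewrite 3 [← hw]
    simp only [map_add, smul_add]; abel
  | tmul p b =>
    rw [eulerOp_tmul, TensorProduct.smul_tmul', TensorProduct.smul_tmul', ← TensorProduct.add_tmul,
      TensorProduct.map_tmul, eulerInv_left m a ha]
    rfl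

lemma op_right (m a : ℕ) (ha : 0 < a)
    (v : MvPolynomial (Fin m) ℂ ⊗[ℂ] CliffordAlgebra (cliffordQ m)) :
    (2 : ℂ) • eulerOp m (TensorProduct.map (eulerInv m a) LinearMap.id v) +
      (a : ℂ) • (TensorProduct.map (eulerInv m a) LinearMap.id v) = v := by
  induction v using TensorProduct.induction_on with
  | zero => simp
  | add u w hu hw =>
    nth_rewrite 3 [← hu]
    nth_rewrite 3 [← hw]
    simp only [map_add, smul_add]; abel
  | tmul p b =>
    rw [TensorProduct.map_tmul, eulerOp_tmul, TensorProduct.smul_tmul', TensorProduct.smul_tmul',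
      ← TensorProduct.add_tmul, eulerInv_right m a ha]
    rfl

lemma dirac_nil_monomial (m n : ℕ) : ∀ (d : Fin m →₀ ℕ), d.degree = n → ∀ (c : ℂ)
    (a : CliffordAlgebra (cliffordQ m)), (dirac m ^ (n + 1)) (monomial d c ⊗ₜ a) = 0 := by
  induction n with
  | zero =>
    intro d hd c a
    rw [Finsupp.degree_eq_zero_iff] at hd
    subst hd
    simp [dirac_tmul, pderiv_monomial]
  | succ n ih =>
    intro d hd c a
    rw [pow_succ, Module.End.mul_apply, dirac_tmul, map_sum]
    refine Finset.sum_eq_zero fun s _ => ?_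
    rw [pderiv_monomial]
    by_cases h : d s = 0
    · simp [h]
    · apply ih
      have hle : Finsupp.single s 1 ≤ d := by
        rw [Finsupp.single_le_iff]; omega
      have h2 := congrArg Finsupp.degree (tsub_add_cancel_of_le hle)
      rw [map_add, Finsupp.degree_single] at h2
      omega

lemma dirac_nil_add (m : ℕ) (u w : MvPolynomial (Fin m) ℂ ⊗[ℂ] CliffordAlgebra (cliffordQ m))
    (hu : ∃ n : ℕ, (dirac m ^ n) u = 0) (hw : ∃ n : ℕ, (dirac m ^ n) w = 0) :
    ∃ n : ℕ, (dirac m ^ n) (u + w) = 0 := by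
  obtain ⟨n, hn⟩ := hu
  obtain ⟨k, hk⟩ := hw
  refine ⟨n + k, ?_⟩
  rw [map_add]
  nth_rewrite 1 [add_comm n k]
  rw [pow_add, pow_add, Module.End.mul_apply, Module.End.mul_apply, hn, hk]
  simp

lemma dirac_nil (m : ℕ) (v : MvPolynomial (Fin m) ℂ ⊗[ℂ] CliffordAlgebra (cliffordQ m)) :
    ∃ n : ℕ, (dirac m ^ n) v = 0 := by
  induction v using TensorProduct.induction_on with
  | zero => exact ⟨0, by simp⟩
  | add u w hu hw => exact dirac_nil_add m u w hu hw
  | tmul p a =>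
    induction p using MvPolynomial.induction_on' with
    | monomial d c => exact ⟨_, dirac_nil_monomial m _ d rfl c a⟩
    | add p q hp hq =>
      rw [TensorProduct.add_tmul]
      exact dirac_nil_add m _ _ hp hq

/-- Monogenic Fischer decomposition in one vector variable: every Clifford-algebra-valued
polynomial `P` has a unique representation `P = Σ_j x^j M_j` as a finite sum with each
`M_j` monogenic (`∂ M_j = 0`). -/
theorem monogenic_fischer (m : ℕ) (hm : 0 < m)
    (P : MvPolynomial (Fin m) ℂ ⊗[ℂ] CliffordAlgebra (cliffordQ m)) :
    ∃! M : ℕ →₀ (MvPolynomial (Fin m) ℂ ⊗[ℂ] CliffordAlgebra (cliffordQ m)),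
      (∀ j, dirac m (M j) = 0) ∧ P = M.sum fun j Mj => (vecVar m ^ j) Mj := by
  exact fischer_abstract (dirac m) (vecVar m) (eulerOp m) m hm (op_Dx m) (op_Ex m) (op_DE m)
    (fun a ha v h => by
      have := op_left m a ha v
      rw [h, map_zero] at this
      exact this.symm)
    (fun a ha w => ⟨_, op_right m a ha w⟩) (dirac_nil m) P
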